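/- arXiv:2401.05927 — 2 statements merged into one kernel-verified Lean document; each statement's English description precedes it below -/
import Mathlib

section
/- Let F be a field and L a finite-dimensional toral Lie algebra over F such that for every x ∈ L the characteristic polynomial of the endomorphism ad x splits over F. Then L is abelian, i.e., ⁅x, y⁆ = 0 for all x, y ∈ L. -/
/-- A Lie algebra `L` over a field `F` is *toral* if for every `x ∈ L` the adjoint
endomorphism `ad x : L → L`, `y ↦ ⁅x, y⁆`, is semisimple, i.e. every `ad x`-invariant
`F`-subspace of `L` has an `ad x`-invariant complement. -/
def IsToral (F L : Type*) [Field F] [LieRing L] [LieAlgebra F L] : Prop :=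
  ∀ x : L, ∀ p : Submodule F L, (∀ y ∈ p, ⁅x, y⁆ ∈ p) →
    ∃ q : Submodule F L, (∀ y ∈ q, ⁅x, y⁆ ∈ q) ∧ IsCompl p q

/-!
If `⁅x, v⁆ = a • v`, then `⁅v, x⁆ = -(a • v)` is killed by `ad v`. A semisimple endomorphism `f`
satisfies `ker (f ^ 2) = ker f`, so `⁅v, x⁆ = 0` already, and hence `a = 0` if `v ≠ 0`. Thus `0` is
the only possible eigenvalue of `ad x`. As its characteristic polynomial splits, `ad x` is
nilpotent, and a nilpotent endomorphism `f` with `ker (f ^ 2) = ker f` vanishes.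
-/

open LieAlgebra Module Polynomial

lemma eq_zero_of_isNilpotent_of_apply_apply_imp {R M : Type*} [Semiring R] [AddCommMonoid M]
    [Module R M] {f : End R M} (hf : IsNilpotent f) (hker : ∀ v, f (f v) = 0 → f v = 0) :
    f = 0 := by
  obtain ⟨n, hn⟩ := hf
  have hpow (k : ℕ) (v : M) (hv : (f ^ (k + 1)) v = 0) : f v = 0 := by
    induction k with
    | zero => simpa using hv
    | succ k ih =>
      refine ih ?_
      rw [pow_succ', pow_succ', End.mul_apply, End.mul_apply] at hv
      rw [pow_succ', End.mul_apply]
      exact hker _ hv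
  exact LinearMap.ext fun v ↦ hpow n v (by simp [pow_succ', hn])

section Endomorphism

variable {R M : Type*} [CommRing R] [AddCommGroup M] [Module R M] {f : End R M}

lemma apply_eq_zero_of_apply_apply_eq_zero_of_isFinitelySemisimple {v : M} (hv : f (f v) = 0)
    (hf : f.IsFinitelySemisimple) : f v = 0 := by
  have hmem : v ∈ f.genEigenspace 0 (2 : ℕ) := by
    rw [End.mem_genEigenspace_nat, LinearMap.mem_ker]
    simpa [pow_two] using hv
  rw [hf.genEigenspace_eq_eigenspace 0 (by norm_num)] at hmem
  simpa using hmem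

lemma isNilpotent_of_splits_charpoly_of_eigenvalues_eq_zero [IsDomain R] [Module.Free R M]
    [Module.Finite R M] (hsplit : f.charpoly.Splits) (hf : ∀ μ, f.HasEigenvalue μ → μ = 0) :
    IsNilpotent f := by
  have hroots : ∀ μ ∈ f.charpoly.roots, μ = 0 := fun μ hμ ↦
    hf μ ((End.hasEigenvalue_iff_isRoot_charpoly f μ).mpr (isRoot_of_mem_roots hμ))
  have hcharpoly : f.charpoly = X ^ f.charpoly.roots.card := by
    conv_lhs =>
      rw [hsplit.eq_prod_roots_of_monic f.charpoly_monic, Multiset.eq_replicate_of_mem hroots]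
    simp
  refine ⟨f.charpoly.roots.card, ?_⟩
  rw [← aeval_X_pow (R := R) f, ← hcharpoly, f.aeval_self_charpoly]

end Endomorphism

lemma eq_zero_of_hasEigenvalue_ad {R L : Type*} [CommRing R] [IsDomain R] [LieRing L]
    [LieAlgebra R L] [IsTorsionFree R L] {x : L} (hx : ∀ v : L, ⁅v, ⁅v, x⁆⁆ = 0 → ⁅v, x⁆ = 0)
    {μ : R} (hμ : (ad R L x).HasEigenvalue μ) : μ = 0 := by
  obtain ⟨v, hv⟩ := hμ.exists_hasEigenvector
  have hvx : ⁅v, x⁆ = -(μ • v) := by rw [← lie_skew, ← ad_apply R, hv.apply_eq_smul]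
  have hμv : μ • v = 0 := by simpa [hvx] using hx v (by simp [hvx])
  exact (smul_eq_zero.mp hμv).resolve_right hv.2

lemma IsToral.isSemisimple_ad {F L : Type*} [Field F] [LieRing L] [LieAlgebra F L]
    (hL : IsToral F L) (x : L) : (ad F L x).IsSemisimple :=
  End.isSemisimple_iff.mpr (hL x)

theorem stmt_1_general (R L : Type*) [CommRing R] [IsDomain R] [LieRing L] [LieAlgebra R L]
    [Module.Free R L] [Module.Finite R L] (hker : ∀ x y : L, ⁅x, ⁅x, y⁆⁆ = 0 → ⁅x, y⁆ = 0)
    (hsplit : ∀ x : L, (ad R L x).charpoly.Splits) : ∀ x y : L, ⁅x, y⁆ = 0 := by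
  intro x y
  have hnil : IsNilpotent (ad R L x) :=
    isNilpotent_of_splits_charpoly_of_eigenvalues_eq_zero (hsplit x) fun _ ↦
      eq_zero_of_hasEigenvalue_ad (hker · x)
  have had : ad R L x = 0 := eq_zero_of_isNilpotent_of_apply_apply_imp hnil (hker x)
  exact LinearMap.congr_fun had y

/-- If `L` is a finite-dimensional toral Lie algebra over `F` such that the characteristic
polynomial of every adjoint endomorphism `ad x` splits over `F`, then `L` is abelian. -/
theorem stmt_1 (F L : Type*) [Field F] [LieRing L] [LieAlgebra F L]
    [FiniteDimensional F L] (hL : IsToral F L)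
    (hsplit : ∀ x : L,
      Polynomial.Splits (LinearMap.charpoly (LieAlgebra.ad F L x))) :
    ∀ x y : L, ⁅x, y⁆ = 0 :=
  stmt_1_general F L (fun x _ hxy ↦ apply_eq_zero_of_apply_apply_eq_zero_of_isFinitelySemisimple
    hxy (hL.isSemisimple_ad x).isFinitelySemisimple) hsplit
end

section
/- Let F be a field of characteristic 0 and L a nontrivial finite-dimensional Lie algebra over F. Then L is pluperfect if and only if L is perfect and the quotient Q = L/Rad(L) of L by its radical decomposes as a finite (possibly empty) internal direct sum of Lie ideals, each of which, regarded as a Lie algebra over F, is simple and pluperfect. -/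
set_option autoImplicit false

/-- A Lie algebra `L` is *pluperfect* if every toral quotient of `L` is trivial:
for every Lie ideal `I` with `L ⧸ I` toral, one has `I = ⊤`. -/
def IsPluperfect (F L : Type*) [Field F] [LieRing L] [LieAlgebra F L] : Prop :=
  ∀ I : LieIdeal F L, IsToral F (L ⧸ I) → I = ⊤

/-!
If `x` lies in an ideal `I` of a toral algebra with `⁅I, I⁆` central, then `(ad x) ^ 3 = 0`, and
`ad x` vanishes because it is also semisimple. Going up the derived series, every solvable ideal of
a toral algebra is therefore central. Now let `L` be perfect and `L ⧸ I` toral. The radical of `L`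
dies in the quotient of `L ⧸ I` by its centre, which is thus a toral quotient of `L ⧸ Rad L`. If
`L ⧸ Rad L` is pluperfect, this quotient vanishes, so `L ⧸ I` is abelian and, by perfectness, zero.

Conversely, pluperfectness passes to quotients. The simple ideals of the semisimple algebra
`L ⧸ Rad L` are direct summands, hence quotients of `L`; and an algebra which is the sum of
pluperfect ideals is pluperfect.
-/

section Quotient

variable {R L M : Type*} [CommRing R] [LieRing L] [LieAlgebra R L] [LieRing M] [LieAlgebra R M]

/-- The quotient map by a Lie ideal, as a homomorphism of Lie algebras
(`LieSubmodule.Quotient.mk'` is only a homomorphism of `L`-modules). -/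
def lieQuotientMk (I : LieIdeal R L) : L →ₗ⁅R⁆ L ⧸ I where
  __ := I.toSubmodule.mkQ
  map_lie' := rfl

theorem lieQuotientMk_surjective (I : LieIdeal R L) : Function.Surjective (lieQuotientMk I) :=
  Submodule.mkQ_surjective _

@[simp]
theorem lieQuotientMk_eq_zero {I : LieIdeal R L} {x : L} : lieQuotientMk I x = 0 ↔ x ∈ I :=
  LieSubmodule.Quotient.mk_eq_zero I

@[simp]
theorem ker_lieQuotientMk (I : LieIdeal R L) : (lieQuotientMk I).ker = I := by
  ext
  simp

/-- The homomorphism of Lie algebras `L ⧸ I → M` induced by a homomorphism `L → M` which vanishes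
on the ideal `I`. -/
def lieQuotientLift (I : LieIdeal R L) (f : L →ₗ⁅R⁆ M) (h : I ≤ f.ker) : L ⧸ I →ₗ⁅R⁆ M where
  __ := I.toSubmodule.liftQ (f : L →ₗ[R] M) h
  map_lie' := by
    rintro ⟨x⟩ ⟨y⟩
    exact f.map_lie x y

@[simp]
theorem lieQuotientLift_mk {I : LieIdeal R L} {f : L →ₗ⁅R⁆ M} (h : I ≤ f.ker) (x : L) :
    lieQuotientLift I f h (lieQuotientMk I x) = f x :=
  rfl

/-- The isomorphism of Lie algebras from an ideal to the quotient by a complementary ideal. -/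
noncomputable def lieIdealEquivQuotientOfIsCompl {I J : LieIdeal R L} (h : IsCompl I J) :
    I ≃ₗ⁅R⁆ L ⧸ J where
  __ := (Submodule.quotientEquivOfIsCompl _ _ (LieSubmodule.isCompl_toSubmodule.mpr h.symm)).symm
  map_lie' := rfl

end Quotient

section Solvable

variable {R L M : Type*} [CommRing R] [LieRing L] [LieAlgebra R L] [LieRing M] [LieAlgebra R M]

theorem derivedSeriesOfIdeal_map_of_surjective {f : L →ₗ⁅R⁆ M} (hf : Function.Surjective f)
    (I : LieIdeal R L) (k : ℕ) :
    LieAlgebra.derivedSeriesOfIdeal R M k (I.map f) =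
      (LieAlgebra.derivedSeriesOfIdeal R L k I).map f := by
  induction k with
  | zero => rfl
  | succ k ih =>
    rw [LieAlgebra.derivedSeriesOfIdeal_succ, LieAlgebra.derivedSeriesOfIdeal_succ, ih,
      LieIdeal.map_bracket_eq f hf]

theorem lieIdeal_isSolvable_iff {I : LieIdeal R L} :
    LieAlgebra.IsSolvable I ↔ ∃ k, LieAlgebra.derivedSeriesOfIdeal R L k I = ⊥ := by
  simp only [LieAlgebra.isSolvable_iff R, LieIdeal.derivedSeries_eq_bot_iff]

theorem isSolvable_map_of_surjective {f : L →ₗ⁅R⁆ M} (hf : Function.Surjective f)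
    (I : LieIdeal R L) [LieAlgebra.IsSolvable I] : LieAlgebra.IsSolvable (I.map f) := by
  obtain ⟨k, hk⟩ := lieIdeal_isSolvable_iff.mp ‹LieAlgebra.IsSolvable I›
  refine lieIdeal_isSolvable_iff.mpr ⟨k, ?_⟩
  rw [derivedSeriesOfIdeal_map_of_surjective hf, hk, LieIdeal.map_eq_bot_iff]
  exact bot_le

theorem isSolvable_of_isSolvable_map {f : L →ₗ⁅R⁆ M} (hf : Function.Surjective f)
    [LieAlgebra.IsSolvable f.ker] {I : LieIdeal R L} (hI : LieAlgebra.IsSolvable (I.map f)) :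
    LieAlgebra.IsSolvable I := by
  obtain ⟨k, hk⟩ := lieIdeal_isSolvable_iff.mp hI
  obtain ⟨l, hl⟩ := lieIdeal_isSolvable_iff.mp ‹LieAlgebra.IsSolvable f.ker›
  rw [derivedSeriesOfIdeal_map_of_surjective hf, LieIdeal.map_eq_bot_iff] at hk
  refine lieIdeal_isSolvable_iff.mpr ⟨l + k, ?_⟩
  rw [LieAlgebra.derivedSeriesOfIdeal_add, eq_bot_iff, ← hl]
  exact LieAlgebra.derivedSeriesOfIdeal_mono hk l

instance hasTrivialRadical_quotient_radical [IsNoetherian R L] :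
    LieAlgebra.HasTrivialRadical R (L ⧸ LieAlgebra.radical R L) := by
  set π := lieQuotientMk (LieAlgebra.radical R L)
  have hπ : Function.Surjective π := lieQuotientMk_surjective _
  have : LieAlgebra.IsSolvable π.ker := by
    rw [ker_lieQuotientMk]
    infer_instance
  refine LieAlgebra.hasTrivialRadical_of_no_solvable_ideals fun J hJ ↦ ?_
  have map_comap : (J.comap π).map π = J := by
    rw [LieIdeal.map_comap_eq (π.isIdealMorphism_of_surjective hπ),
      π.idealRange_eq_top_of_surjective hπ, top_inf_eq]
  have comap_le : J.comap π ≤ π.ker := by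
    rw [ker_lieQuotientMk, ← LieAlgebra.LieIdeal.solvable_iff_le_radical]
    exact isSolvable_of_isSolvable_map hπ (map_comap.symm ▸ hJ)
  rw [← map_comap, LieIdeal.map_eq_bot_iff]
  exact comap_le

end Solvable

section Semisimple

variable {R L : Type*} [CommRing R] [LieRing L] [LieAlgebra R L] [LieAlgebra.IsSemisimple R L]

theorem exists_isInternal_isSimple [IsNoetherian R L] :
    ∃ (m : ℕ) (J : Fin m → LieIdeal R L),
      DirectSum.IsInternal (fun i ↦ (J i).toSubmodule) ∧ ∀ i, LieAlgebra.IsSimple R (J i) := by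
  have independent := LieAlgebra.IsSemisimple.sSupIndep_isAtom (R := R) (L := L)
  have : Finite {I : LieIdeal R L | IsAtom I} := WellFoundedGT.finite_of_sSupIndep independent
  let e := (Finite.equivFin {I : LieIdeal R L | IsAtom I}).symm
  refine ⟨_, fun i ↦ e i, ?_, fun i ↦ LieAlgebra.IsSemisimple.isSimple_of_isAtom _ (e i).2⟩
  apply DirectSum.isInternal_submodule_of_iSupIndep_of_iSup_eq_top
  · exact LieSubmodule.iSupIndep_toSubmodule.mpr
      (((sSupIndep_iff _).mp independent).comp e.injective)
  · rw [LieSubmodule.iSup_toSubmodule_eq_top, ← LieAlgebra.IsSemisimple.sSup_atoms_eq_top,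
      sSup_eq_iSup']
    exact e.iSup_comp (g := fun I : {I : LieIdeal R L | IsAtom I} ↦ I.1)

end Semisimple

section SemisimpleEndomorphism

open Module

variable {R M N : Type*} [CommRing R] [AddCommGroup M] [Module R M] [AddCommGroup N] [Module R N]
  {f : Module.End R M} {g : Module.End R N} {φ : M →ₗ[R] N}

/-- A linear map intertwining endomorphisms `f` and `g`, as a morphism between the associated
modules over the polynomial ring. -/
noncomputable def aevalMap (h : φ ∘ₗ f = g ∘ₗ φ) : AEval' f →ₗ[Polynomial R] AEval' g :=
  LinearMap.ofAEval f ((AEval'.of g).toLinearMap ∘ₗ φ) fun m ↦ by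
    simpa [AEval'.X_smul_of] using LinearMap.congr_fun h m

theorem isSemisimple_of_injective_of_comp_eq (hφ : Function.Injective φ) (h : φ ∘ₗ f = g ∘ₗ φ)
    (hg : g.IsSemisimple) : f.IsSemisimple := by
  have : IsSemisimpleModule (Polynomial R) (AEval' g) := hg
  exact IsSemisimpleModule.of_injective (aevalMap h)
    ((AEval'.of g).injective.comp (hφ.comp (AEval'.of f).symm.injective))

theorem isSemisimple_of_surjective_of_comp_eq (hφ : Function.Surjective φ) (h : φ ∘ₗ f = g ∘ₗ φ)
    (hf : f.IsSemisimple) : g.IsSemisimple := by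
  have : IsSemisimpleModule (Polynomial R) (AEval' f) := hf
  exact IsSemisimpleModule.of_surjective (aevalMap h)
    ((AEval'.of g).surjective.comp (hφ.comp (AEval'.of f).symm.surjective))

end SemisimpleEndomorphism

section Toral

variable {F L M : Type*} [Field F] [LieRing L] [LieAlgebra F L] [LieRing M] [LieAlgebra F M]

theorem isToral_iff_isSemisimple_ad :
    IsToral F L ↔ ∀ x : L, (LieAlgebra.ad F L x).IsSemisimple := by
  simp only [Module.End.isSemisimple_iff]
  rfl

theorem isToral_of_isLieAbelian [IsLieAbelian L] : IsToral F L := by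
  refine isToral_iff_isSemisimple_ad.mpr fun x ↦ ?_
  have ad_eq_zero : LieAlgebra.ad F L x = 0 := LinearMap.ext (trivial_lie_zero L L x)
  simp [ad_eq_zero]

namespace IsToral

theorem of_injective {f : L →ₗ⁅F⁆ M} (hf : Function.Injective f) (hM : IsToral F M) :
    IsToral F L := by
  rw [isToral_iff_isSemisimple_ad] at hM ⊢
  exact fun x ↦ isSemisimple_of_injective_of_comp_eq (g := LieAlgebra.ad F M (f x))
    (φ := (f : L →ₗ[F] M)) hf (LinearMap.ext fun y ↦ f.map_lie x y) (hM (f x))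

theorem of_surjective {f : L →ₗ⁅F⁆ M} (hf : Function.Surjective f) (hL : IsToral F L) :
    IsToral F M := by
  rw [isToral_iff_isSemisimple_ad] at hL ⊢
  refine hf.forall.mpr fun x ↦ ?_
  exact isSemisimple_of_surjective_of_comp_eq (g := LieAlgebra.ad F M (f x))
    (φ := (f : L →ₗ[F] M)) hf (LinearMap.ext fun y ↦ f.map_lie x y) (hL x)

theorem le_center_of_lie_le_center (hL : IsToral F L) {I : LieIdeal F L}
    (hI : ⁅I, I⁆ ≤ LieAlgebra.center F L) : I ≤ LieAlgebra.center F L := by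
  intro x hx
  have nilpotent : IsNilpotent (LieAlgebra.ad F L x) := by
    refine ⟨3, LinearMap.ext fun y ↦ ?_⟩
    have : ⁅x, ⁅x, y⁆⁆ ∈ LieAlgebra.center F L :=
      hI (LieSubmodule.lie_mem_lie hx (lie_mem_left F L I x y hx))
    exact this x
  have ad_eq_zero := Module.End.eq_zero_of_isNilpotent_isSemisimple nilpotent
    (isToral_iff_isSemisimple_ad.mp hL x)
  intro y
  rw [← lie_skew, ← LieAlgebra.ad_apply (R := F), ad_eq_zero, LinearMap.zero_apply, neg_zero]

theorem le_center_of_isSolvable (hL : IsToral F L) (I : LieIdeal F L) [LieAlgebra.IsSolvable I] :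
    I ≤ LieAlgebra.center F L := by
  obtain ⟨k, hk⟩ := lieIdeal_isSolvable_iff.mp ‹LieAlgebra.IsSolvable I›
  have descend (l : ℕ) (hl : LieAlgebra.derivedSeriesOfIdeal F L l I ≤ LieAlgebra.center F L) :
      I ≤ LieAlgebra.center F L := by
    induction l with
    | zero => exact hl
    | succ l ih =>
      rw [LieAlgebra.derivedSeriesOfIdeal_succ] at hl
      exact ih (hL.le_center_of_lie_le_center hl)
  exact descend k (hk ▸ bot_le)

end IsToral

end Toral

section Pluperfect

variable {F L M : Type*} [Field F] [LieRing L] [LieAlgebra F L] [LieRing M] [LieAlgebra F M]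

namespace IsPluperfect

theorem hom_eq_zero_of_isToral (hL : IsPluperfect F L) (hM : IsToral F M) (f : L →ₗ⁅F⁆ M) :
    f = 0 := by
  have toral_quotient : IsToral F (L ⧸ f.ker) :=
    (hM.of_injective (f := f.range.incl) Subtype.val_injective).of_injective
      (f := f.quotKerEquivRange.toLieHom) f.quotKerEquivRange.injective
  ext x
  exact LieHom.mem_ker.mp (hL f.ker toral_quotient ▸ LieSubmodule.mem_top x)

theorem of_surjective {f : L →ₗ⁅F⁆ M} (hf : Function.Surjective f) (hL : IsPluperfect F L) :
    IsPluperfect F M := by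
  intro I hI
  rw [eq_top_iff]
  intro y _
  obtain ⟨x, rfl⟩ := hf y
  rw [← lieQuotientMk_eq_zero]
  exact LieHom.congr_fun (hL.hom_eq_zero_of_isToral hI ((lieQuotientMk I).comp f)) x

theorem quotient (hL : IsPluperfect F L) (I : LieIdeal F L) : IsPluperfect F (L ⧸ I) :=
  hL.of_surjective (lieQuotientMk_surjective I)

theorem of_isCompl (hL : IsPluperfect F L) {I J : LieIdeal F L} (h : IsCompl I J) :
    IsPluperfect F I :=
  let e := (lieIdealEquivQuotientOfIsCompl h).symm
  (hL.quotient J).of_surjective (f := e.toLieHom) e.surjective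

theorem of_iSup_eq_top {ι : Sort*} {J : ι → LieIdeal F L} (hJ : ⨆ i, J i = ⊤)
    (h : ∀ i, IsPluperfect F (J i)) : IsPluperfect F L := by
  intro I hI
  rw [eq_top_iff, ← hJ, iSup_le_iff]
  intro i x hx
  rw [← lieQuotientMk_eq_zero]
  exact LieHom.congr_fun ((h i).hom_eq_zero_of_isToral hI ((lieQuotientMk I).comp (J i).incl))
    ⟨x, hx⟩

theorem lie_top_top (hL : IsPluperfect F L) : ⁅(⊤ : LieIdeal F L), (⊤ : LieIdeal F L)⁆ = ⊤ := by
  apply hL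
  have : IsLieAbelian (L ⧸ ⁅(⊤ : LieIdeal F L), (⊤ : LieIdeal F L)⁆) := by
    refine ⟨?_⟩
    rintro ⟨x⟩ ⟨y⟩
    exact lieQuotientMk_eq_zero.mpr
      (LieSubmodule.lie_mem_lie (LieSubmodule.mem_top x) (LieSubmodule.mem_top y))
  exact isToral_of_isLieAbelian

theorem of_quotient_of_isSolvable (hL : ⁅(⊤ : LieIdeal F L), (⊤ : LieIdeal F L)⁆ = ⊤)
    {R : LieIdeal F L} [LieAlgebra.IsSolvable R] (hR : IsPluperfect F (L ⧸ R)) :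
    IsPluperfect F L := by
  intro I hI
  set π := lieQuotientMk I
  let Z := LieAlgebra.center F (L ⧸ I)
  have map_le_center : R.map π ≤ Z :=
    have := isSolvable_map_of_surjective (lieQuotientMk_surjective I) R
    hI.le_center_of_isSolvable _
  have le_ker : R ≤ ((lieQuotientMk Z).comp π).ker := fun x hx ↦
    lieQuotientMk_eq_zero.mpr (map_le_center (LieIdeal.mem_map hx))
  have lift_eq_zero : lieQuotientLift R _ le_ker = 0 :=
    hR.hom_eq_zero_of_isToral (hI.of_surjective (lieQuotientMk_surjective Z)) _
  have mem_center (x : L) : π x ∈ Z := by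
    rw [← lieQuotientMk_eq_zero, ← LieHom.comp_apply, ← lieQuotientLift_mk le_ker, lift_eq_zero,
      LieHom.zero_apply]
  rw [eq_top_iff, ← hL, LieSubmodule.lie_le_iff]
  intro x _ y _
  rw [← lieQuotientMk_eq_zero, LieHom.map_lie]
  exact mem_center y (π x)

end IsPluperfect

theorem isPluperfect_iff_quotient_radical [FiniteDimensional F L] :
    IsPluperfect F L ↔
      ⁅(⊤ : LieIdeal F L), (⊤ : LieIdeal F L)⁆ = ⊤ ∧
        IsPluperfect F (L ⧸ LieAlgebra.radical F L) :=
  ⟨fun hL ↦ ⟨hL.lie_top_top, hL.quotient _⟩,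
    fun ⟨perfect, hQ⟩ ↦ .of_quotient_of_isSolvable perfect hQ⟩

theorem isPluperfect_iff_exists_isInternal [FiniteDimensional F L] [LieAlgebra.IsSemisimple F L] :
    IsPluperfect F L ↔
      ∃ (m : ℕ) (J : Fin m → LieIdeal F L),
        DirectSum.IsInternal (fun i ↦ (J i).toSubmodule) ∧
          ∀ i, LieAlgebra.IsSimple F (J i) ∧ IsPluperfect F (J i) := by
  constructor
  · intro hL
    obtain ⟨m, J, internal, simple⟩ := exists_isInternal_isSimple (R := F) (L := L)
    refine ⟨m, J, internal, fun i ↦ ⟨simple i, ?_⟩⟩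
    obtain ⟨K, hK⟩ := exists_isCompl (J i)
    exact hL.of_isCompl hK
  · rintro ⟨m, J, internal, hJ⟩
    have iSup_eq_top : ⨆ i, J i = ⊤ :=
      LieSubmodule.iSup_toSubmodule_eq_top.mp internal.submodule_iSup_eq_top
    exact .of_iSup_eq_top iSup_eq_top fun i ↦ (hJ i).2

end Pluperfect

/-- A nontrivial finite-dimensional Lie algebra over a field of characteristic zero is
pluperfect iff it is perfect and the quotient by its radical is a finite (possibly empty)
internal direct sum of Lie ideals, each of which is a simple and pluperfect Lie algebra. -/
theorem stmt_4 (F L : Type*) [Field F] [CharZero F] [LieRing L] [LieAlgebra F L]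
    [FiniteDimensional F L] [Nontrivial L] :
    IsPluperfect F L ↔
      (⁅(⊤ : LieIdeal F L), (⊤ : LieIdeal F L)⁆ = ⊤ ∧
        ∃ (m : ℕ) (J : Fin m → LieIdeal F (L ⧸ LieAlgebra.radical F L)),
          DirectSum.IsInternal (fun i => (J i).toSubmodule) ∧
          ∀ i, LieAlgebra.IsSimple F (J i) ∧ IsPluperfect F (J i)) := by
  have semisimple : LieAlgebra.IsSemisimple F (L ⧸ LieAlgebra.radical F L) := inferInstance
  rw [isPluperfect_iff_quotient_radical, isPluperfect_iff_exists_isInternal]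
end
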